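/- (Ascent step for k = 2) In the Cholesky setting, Tr(𝛉𝚯) + ∂̄ Tr(θ₁θ₂) = ∂ Tr(2θ₂θ̄₁ + θ₂θ̄₂). -/

import Mathlib

/-- An abstract model of the Dolbeault double complex of `(p,q)`-forms on a complex
manifold: a bigraded associative `ℂ`-algebra `Ω = ⨁ Ω^{p,q}`, graded-commutative with
respect to total degree, with `ℂ`-linear operators `∂` (`pd`) and `∂̄` (`pdb`) of
bidegrees `(1,0)` and `(0,1)`, squaring to zero and anticommuting, satisfying the
graded Leibniz rule. -/
structure DolbeaultAlgebra (Ω : Type*) [Ring Ω] [Algebra ℂ Ω] where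
  /-- the `ℂ`-subspace of elements of bidegree `(p,q)` -/
  deg : ℕ → ℕ → Submodule ℂ Ω
  one_mem : (1 : Ω) ∈ deg 0 0
  mul_mem : ∀ {p q p' q'} {a b : Ω}, a ∈ deg p q → b ∈ deg p' q' →
    a * b ∈ deg (p + p') (q + q')
  gcomm : ∀ {p q p' q'} (a b : Ω), a ∈ deg p q → b ∈ deg p' q' →
    a * b = ((-1 : ℂ) ^ ((p + q) * (p' + q'))) • (b * a)
  /-- the operator `∂` -/
  pd : Ω →ₗ[ℂ] Ω
  /-- the operator `∂̄` -/
  pdb : Ω →ₗ[ℂ] Ω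
  pd_mem : ∀ {p q} {a : Ω}, a ∈ deg p q → pd a ∈ deg (p + 1) q
  pdb_mem : ∀ {p q} {a : Ω}, a ∈ deg p q → pdb a ∈ deg p (q + 1)
  pd_pd : ∀ a : Ω, pd (pd a) = 0
  pdb_pdb : ∀ a : Ω, pdb (pdb a) = 0
  pd_pdb : ∀ a : Ω, pd (pdb a) + pdb (pd a) = 0
  pd_leibniz : ∀ {p q} (a b : Ω), a ∈ deg p q →
    pd (a * b) = pd a * b + ((-1 : ℂ) ^ (p + q)) • (a * pd b)
  pdb_leibniz : ∀ {p q} (a b : Ω), a ∈ deg p q →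
    pdb (a * b) = pdb a * b + ((-1 : ℂ) ^ (p + q)) • (a * pdb b)

namespace DolbeaultAlgebra

variable {Ω : Type*} [Ring Ω] [Algebra ℂ Ω] {r : ℕ}

/-- the entrywise extension of `∂` to `r × r` matrices over `Ω` -/
def mpd (A : DolbeaultAlgebra Ω) (M : Matrix (Fin r) (Fin r) Ω) :
    Matrix (Fin r) (Fin r) Ω := M.map A.pd

/-- the entrywise extension of `∂̄` to `r × r` matrices over `Ω` -/
def mpdb (A : DolbeaultAlgebra Ω) (M : Matrix (Fin r) (Fin r) Ω) :
    Matrix (Fin r) (Fin r) Ω := M.map A.pdb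

/-- the assertion that all entries of a matrix lie in `Ω^{p,q}` -/
def MatDeg (A : DolbeaultAlgebra Ω) (p q : ℕ) (M : Matrix (Fin r) (Fin r) Ω) : Prop :=
  ∀ i j, M i j ∈ A.deg p q

end DolbeaultAlgebra

variable {Ω : Type*} [Ring Ω] [Algebra ℂ Ω]

/-!
Put `CS h = Tr (𝛉 𝚯)`, where `𝛉 = h⁻¹ ∂h` and `𝚯 = ∂̄𝛉`. Since `(cb)⁻¹ ∂(cb) = b⁻¹ (θ₁ + θ₂) b`,
cyclicity of the trace gives a formula of Polyakov–Wiegmann type,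
`CS (cb) + ∂̄ Tr (θ₁ θ₂) = CS b + CS c + 2 ∂ Tr (θ₂ θ̄₁)`, for all invertible `b`, `c` of degree
zero. The trace of a product of triangular matrices only sees the diagonals. Hence `CS b = 0`,
because `b⁻¹ ∂b` has zero diagonal, and in `CS c = ∂ Tr (θ₂ θ̄₂) - Tr (θ₂² θ̄₂)` the cubic term
vanishes, because the diagonal entries of `θ₂` are odd and so square to zero.
-/

section BlockTriangular

open Matrix

variable {R ι α : Type*} [NonUnitalNonAssocSemiring R] [Fintype ι] [LinearOrder α] {u : ι → α}
  {M N : Matrix ι ι R}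

theorem mul_apply_self_of_blockTriangular (hu : u.Injective) (hM : M.BlockTriangular u)
    (hN : N.BlockTriangular u) (i : ι) : (M * N) i i = M i i * N i i := by
  rw [mul_apply]
  refine Fintype.sum_eq_single i fun k hk => ?_
  rcases (hu.ne hk).lt_or_gt with hlt | hgt
  · rw [hM hlt, zero_mul]
  · rw [hN hgt, mul_zero]

theorem trace_mul_of_blockTriangular (hu : u.Injective) (hM : M.BlockTriangular u)
    (hN : N.BlockTriangular u) : trace (M * N) = ∑ i, M i i * N i i :=
  Finset.sum_congr rfl fun i _ => mul_apply_self_of_blockTriangular hu hM hN i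

end BlockTriangular

namespace DolbeaultAlgebra

open Matrix

variable {r : ℕ} {p q p' q' : ℕ} {M N : Matrix (Fin r) (Fin r) Ω}

/-- The complex conjugate Dolbeault algebra, in which `∂` and `∂̄` trade places. Its `mpd` is the
`mpdb` of `A`, by `rfl`, so that facts about `∂` transfer to `∂̄`. -/
def conj (A : DolbeaultAlgebra Ω) : DolbeaultAlgebra Ω where
  deg p q := A.deg q p
  one_mem := A.one_mem
  mul_mem := A.mul_mem
  gcomm {p q p' q'} a b ha hb := by rw [add_comm p, add_comm p']; exact A.gcomm a b ha hb
  pd := A.pdb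
  pdb := A.pd
  pd_mem := A.pdb_mem
  pdb_mem := A.pd_mem
  pd_pd := A.pdb_pdb
  pdb_pdb := A.pd_pd
  pd_pdb a := by rw [add_comm]; exact A.pd_pdb a
  pd_leibniz {p q} a b ha := by rw [add_comm p]; exact A.pdb_leibniz a b ha
  pdb_leibniz {p q} a b ha := by rw [add_comm p]; exact A.pd_leibniz a b ha

/-- The commutative ring `Ω^{0,0}`, as a subalgebra of `Ω`. Matrices over it have access to the
theory of inverses over commutative rings. -/
def degZero (A : DolbeaultAlgebra Ω) : Subalgebra ℂ Ω :=
  (A.deg 0 0).toSubalgebra A.one_mem fun _ _ => A.mul_mem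

instance (A : DolbeaultAlgebra Ω) : CommRing A.degZero :=
  { (inferInstance : Ring A.degZero) with
    mul_comm := fun x y => Subtype.ext <| by simpa using A.gcomm x.1 y.1 x.2 y.2 }

section MatDeg

variable {A : DolbeaultAlgebra Ω}

theorem MatDeg.conj (hM : A.MatDeg p q M) : A.conj.MatDeg q p M := hM

theorem MatDeg.add (hM : A.MatDeg p q M) (hN : A.MatDeg p q N) : A.MatDeg p q (M + N) :=
  fun i j => add_mem (hM i j) (hN i j)

theorem MatDeg.sub (hM : A.MatDeg p q M) (hN : A.MatDeg p q N) : A.MatDeg p q (M - N) :=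
  fun i j => sub_mem (hM i j) (hN i j)

theorem MatDeg.mul (hM : A.MatDeg p q M) (hN : A.MatDeg p' q' N) :
    A.MatDeg (p + p') (q + q') (M * N) := fun i j => by
  rw [mul_apply]
  exact sum_mem fun k _ => A.mul_mem (hM i k) (hN k j)

theorem MatDeg.mpd (hM : A.MatDeg p q M) : A.MatDeg (p + 1) q (A.mpd M) :=
  fun i j => A.pd_mem (hM i j)

theorem MatDeg.mpdb (hM : A.MatDeg p q M) : A.MatDeg p (q + 1) (A.mpdb M) :=
  hM.conj.mpd

end MatDeg

variable (A : DolbeaultAlgebra Ω)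

theorem mul_self_eq_zero_of_odd {x : Ω} (hx : x ∈ A.deg p q) (hpq : Odd (p + q)) :
    x * x = 0 := by
  have hneg : x * x = -(x * x) := by
    simpa [(hpq.mul hpq).neg_one_pow] using A.gcomm x x hx hx
  have htwo : (2 : ℂ) • (x * x) = 0 := by
    rw [two_smul]
    exact eq_neg_iff_add_eq_zero.mp hneg
  exact (smul_eq_zero.mp htwo).resolve_left two_ne_zero

theorem trace_mul_comm_of_even (hM : A.MatDeg p q M) (hN : A.MatDeg p' q' N)
    (heven : Even ((p + q) * (p' + q'))) : trace (M * N) = trace (N * M) := by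
  simp only [trace, diag_apply, mul_apply]
  rw [Finset.sum_comm]
  refine Finset.sum_congr rfl fun k _ => Finset.sum_congr rfl fun l _ => ?_
  simpa [heven.neg_one_pow] using A.gcomm _ _ (hM l k) (hN k l)

theorem trace_mul_cycle_of_odd {p'' q'' : ℕ} {P : Matrix (Fin r) (Fin r) Ω}
    (hM : A.MatDeg p q M) (hpq : Odd (p + q)) (hN : A.MatDeg p' q' N) (hpq' : Odd (p' + q'))
    (hP : A.MatDeg p'' q'' P) : trace (M * N * P) = trace (P * M * N) := by
  have heven : Even (p + p' + (q + q')) := by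
    rw [add_add_add_comm]
    exact hpq.add_odd hpq'
  rw [A.trace_mul_comm_of_even (hM.mul hN) hP (heven.mul_right _), mul_assoc]

theorem blockTriangular_inv {α : Type*} [LinearOrder α] {u : Fin r → α}
    {g : (Matrix (Fin r) (Fin r) Ω)ˣ} (hg : A.MatDeg 0 0 g.val) (hg' : A.MatDeg 0 0 g⁻¹.val)
    (htri : g.val.BlockTriangular u) : g⁻¹.val.BlockTriangular u := by
  let G : Matrix (Fin r) (Fin r) A.degZero := of fun i j => ⟨g.val i j, hg i j⟩
  let G' : Matrix (Fin r) (Fin r) A.degZero := of fun i j => ⟨g⁻¹.val i j, hg' i j⟩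
  have hG : G.BlockTriangular u := fun i j hij => Subtype.ext (htri hij)
  have hmul : G' * G = 1 := by
    apply map_injective (f := A.degZero.val) Subtype.val_injective
    simp only [Matrix.map_mul, Matrix.map_one _ (map_zero A.degZero.val) (map_one A.degZero.val)]
    exact g.inv_mul
  have : Invertible G := invertibleOfLeftInverse G G' hmul
  have hG' : G'.BlockTriangular u :=
    inv_eq_left_inv hmul ▸ blockTriangular_inv_of_blockTriangular hG
  exact hG'.map A.degZero.val

theorem pd_one : A.pd 1 = 0 := by
  simpa using A.pd_leibniz 1 1 A.one_mem

theorem mpd_one : A.mpd (1 : Matrix (Fin r) (Fin r) Ω) = 0 := by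
  ext i j
  by_cases hij : i = j <;> simp [mpd, one_apply, hij, A.pd_one]

theorem mpd_add : A.mpd (M + N) = A.mpd M + A.mpd N :=
  Matrix.map_add _ (map_add A.pd) M N

theorem mpdb_add : A.mpdb (M + N) = A.mpdb M + A.mpdb N :=
  A.conj.mpd_add

theorem mpd_mpd : A.mpd (A.mpd M) = 0 :=
  Matrix.ext fun i j => A.pd_pd (M i j)

theorem mpd_mpdb : A.mpd (A.mpdb M) = -A.mpdb (A.mpd M) :=
  Matrix.ext fun i j => eq_neg_of_add_eq_zero_left (A.pd_pdb (M i j))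

theorem pd_trace : A.pd (trace M) = trace (A.mpd M) :=
  AddMonoidHom.map_trace A.pd M

theorem mpd_mul (hM : A.MatDeg p q M) :
    A.mpd (M * N) = A.mpd M * N + (-1 : ℂ) ^ (p + q) • (M * A.mpd N) := by
  ext i j
  simp only [mpd, map_apply, mul_apply, Matrix.add_apply, Matrix.smul_apply, map_sum,
    Finset.smul_sum, ← Finset.sum_add_distrib]
  exact Finset.sum_congr rfl fun k _ => A.pd_leibniz _ _ (hM i k)

theorem mpd_mul_of_even (hM : A.MatDeg p q M) (hpq : Even (p + q)) :
    A.mpd (M * N) = A.mpd M * N + M * A.mpd N := by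
  rw [A.mpd_mul hM, hpq.neg_one_pow, one_smul]

theorem mpd_mul_of_odd (hM : A.MatDeg p q M) (hpq : Odd (p + q)) :
    A.mpd (M * N) = A.mpd M * N - M * A.mpd N := by
  rw [A.mpd_mul hM, hpq.neg_one_pow, neg_one_smul, sub_eq_add_neg]

theorem pd_trace_mul_of_odd (hM : A.MatDeg p q M) (hpq : Odd (p + q)) :
    A.pd (trace (M * N)) = trace (A.mpd M * N) - trace (M * A.mpd N) := by
  rw [A.pd_trace, A.mpd_mul_of_odd hM hpq, trace_sub]

/-- The left logarithmic derivative `g⁻¹ ∂g`, i.e. the `(1,0)`-part of the left Maurer–Cartan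
form. The `(0,1)`-part `g⁻¹ ∂̄g` is `A.conj.leftLogDeriv g`. In the Cholesky setting `𝛉` and `θ₂`
are those of `h` and `c`. -/
def leftLogDeriv (g : (Matrix (Fin r) (Fin r) Ω)ˣ) : Matrix (Fin r) (Fin r) Ω :=
  g⁻¹.val * A.mpd g.val

/-- The right logarithmic derivative `(∂g) g⁻¹`; `(∂̄g) g⁻¹` is `A.conj.rightLogDeriv g`. In the
Cholesky setting `θ₁` is that of `b`. -/
def rightLogDeriv (g : (Matrix (Fin r) (Fin r) Ω)ˣ) : Matrix (Fin r) (Fin r) Ω :=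
  A.mpd g.val * g⁻¹.val

/-- The form `Tr (𝛉 𝚯)` with `𝛉 = h⁻¹ ∂h` and `𝚯 = ∂̄𝛉`; it is of Chern–Simons type, being a
`∂̄`-primitive of `Tr 𝚯²`. -/
def chernSimons (h : (Matrix (Fin r) (Fin r) Ω)ˣ) : Ω :=
  trace (A.leftLogDeriv h * A.mpdb (A.leftLogDeriv h))

section LogDeriv

variable {A} {b c g : (Matrix (Fin r) (Fin r) Ω)ˣ}

theorem MatDeg.leftLogDeriv (hg : A.MatDeg 0 0 g.val) (hg' : A.MatDeg 0 0 g⁻¹.val) :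
    A.MatDeg 1 0 (A.leftLogDeriv g) :=
  hg'.mul hg.mpd

theorem MatDeg.rightLogDeriv (hg : A.MatDeg 0 0 g.val) (hg' : A.MatDeg 0 0 g⁻¹.val) :
    A.MatDeg 1 0 (A.rightLogDeriv g) :=
  hg.mpd.mul hg'

variable (A)

theorem mpd_eq_rightLogDeriv_mul : A.mpd g.val = A.rightLogDeriv g * g.val := by
  rw [rightLogDeriv, Units.inv_mul_cancel_right]

theorem leftLogDeriv_eq_inv_mul_rightLogDeriv_mul :
    A.leftLogDeriv g = g⁻¹.val * A.rightLogDeriv g * g.val := by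
  rw [leftLogDeriv, mpd_eq_rightLogDeriv_mul, mul_assoc]

theorem leftLogDeriv_mul (hc : A.MatDeg 0 0 c.val) :
    A.leftLogDeriv (c * b) = b⁻¹.val * (A.rightLogDeriv b + A.leftLogDeriv c) * b.val := by
  simp only [leftLogDeriv, rightLogDeriv, _root_.mul_inv_rev, Units.val_mul,
    A.mpd_mul_of_even hc (by decide), mul_add, add_mul, mul_assoc, Units.inv_mul_cancel_left,
    Units.inv_mul, mul_one]
  exact add_comm _ _

theorem mpd_inv (hg' : A.MatDeg 0 0 g⁻¹.val) :
    A.mpd g⁻¹.val = -(g⁻¹.val * A.mpd g.val * g⁻¹.val) := by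
  have hmul : A.mpd g⁻¹.val * g.val = -(g⁻¹.val * A.mpd g.val) := by
    rw [eq_neg_iff_add_eq_zero, ← A.mpd_mul_of_even hg' (by decide), g.inv_mul, A.mpd_one]
  rw [← neg_mul, ← hmul, Units.mul_inv_cancel_right]

theorem mpd_leftLogDeriv (hg' : A.MatDeg 0 0 g⁻¹.val) :
    A.mpd (A.leftLogDeriv g) = -(A.leftLogDeriv g * A.leftLogDeriv g) := by
  rw [leftLogDeriv, A.mpd_mul_of_even hg' (by decide), A.mpd_mpd, A.mpd_inv hg']
  noncomm_ring

theorem mpd_conj_leftLogDeriv (hg' : A.MatDeg 0 0 g⁻¹.val) :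
    A.mpd (A.conj.leftLogDeriv g) = -A.mpdb (A.leftLogDeriv g) -
      A.leftLogDeriv g * A.conj.leftLogDeriv g - A.conj.leftLogDeriv g * A.leftLogDeriv g := by
  have hmpd : A.mpd (A.conj.leftLogDeriv g) =
      A.mpd g⁻¹.val * A.mpdb g.val + g⁻¹.val * A.mpd (A.mpdb g.val) :=
    A.mpd_mul_of_even hg' (by decide)
  have hmpdb : A.mpdb (A.leftLogDeriv g) =
      A.mpdb g⁻¹.val * A.mpd g.val + g⁻¹.val * A.mpdb (A.mpd g.val) :=
    A.conj.mpd_mul_of_even hg'.conj (by decide)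
  have hinv : A.mpdb g⁻¹.val = -(g⁻¹.val * A.mpdb g.val * g⁻¹.val) := A.conj.mpd_inv hg'.conj
  have hconj : A.conj.leftLogDeriv g = g⁻¹.val * A.mpdb g.val := rfl
  rw [hmpd, hmpdb, hinv, A.mpd_inv hg', A.mpd_mpdb, hconj, leftLogDeriv]
  noncomm_ring

theorem mpd_conj_rightLogDeriv (hg : A.MatDeg 0 0 g.val) (hg' : A.MatDeg 0 0 g⁻¹.val) :
    A.mpd (A.conj.rightLogDeriv g) = -A.mpdb (A.rightLogDeriv g) +
      A.rightLogDeriv g * A.conj.rightLogDeriv g + A.conj.rightLogDeriv g * A.rightLogDeriv g := by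
  have hmpd : A.mpd (A.conj.rightLogDeriv g) =
      A.mpd (A.mpdb g.val) * g⁻¹.val - A.mpdb g.val * A.mpd g⁻¹.val :=
    A.mpd_mul_of_odd hg.mpdb (by decide)
  have hmpdb : A.mpdb (A.rightLogDeriv g) =
      A.mpdb (A.mpd g.val) * g⁻¹.val - A.mpd g.val * A.mpdb g⁻¹.val :=
    A.conj.mpd_mul_of_odd hg.mpd.conj (by decide)
  have hinv : A.mpdb g⁻¹.val = -(g⁻¹.val * A.mpdb g.val * g⁻¹.val) := A.conj.mpd_inv hg'.conj
  have hconj : A.conj.rightLogDeriv g = A.mpdb g.val * g⁻¹.val := rfl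
  rw [hmpd, hmpdb, hinv, A.mpd_inv hg', A.mpd_mpdb, hconj, rightLogDeriv]
  noncomm_ring

theorem mpd_inv_mul_mul_of_odd (hM : A.MatDeg p q M) (hpq : Odd (p + q))
    (hg' : A.MatDeg 0 0 g⁻¹.val) :
    A.mpd (g⁻¹.val * M * g.val) =
      g⁻¹.val * (A.mpd M - A.rightLogDeriv g * M - M * A.rightLogDeriv g) * g.val := by
  have hinv : A.mpd g⁻¹.val = -(g⁻¹.val * A.rightLogDeriv g) := by
    rw [A.mpd_inv hg', rightLogDeriv, mul_assoc]
  rw [A.mpd_mul_of_odd (hg'.mul hM) (by simpa using hpq), A.mpd_mul_of_even hg' (by decide), hinv,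
    A.mpd_eq_rightLogDeriv_mul]
  noncomm_ring

theorem trace_inv_mul_mul (hM : A.MatDeg p q M) (hg : A.MatDeg 0 0 g.val)
    (hg' : A.MatDeg 0 0 g⁻¹.val) : trace (g⁻¹.val * M * g.val) = trace M := by
  rw [mul_assoc, A.trace_mul_comm_of_even hg' (hM.mul hg) (by simp), Units.mul_inv_cancel_right]

theorem chernSimons_eq_of_leftLogDeriv_eq_inv_mul_mul {h : (Matrix (Fin r) (Fin r) Ω)ˣ}
    (hM : A.MatDeg 1 0 M) (hg : A.MatDeg 0 0 g.val) (hg' : A.MatDeg 0 0 g⁻¹.val)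
    (hh : A.leftLogDeriv h = g⁻¹.val * M * g.val) :
    A.chernSimons h =
      trace (M * A.mpdb M) - (2 : ℂ) • trace (M * M * A.conj.rightLogDeriv g) := by
  set γ := A.conj.rightLogDeriv g
  have hγ : A.MatDeg 0 1 γ := hg.conj.rightLogDeriv hg'.conj
  have hcurv : A.mpdb (g⁻¹.val * M * g.val) = g⁻¹.val * (A.mpdb M - γ * M - M * γ) * g.val :=
    A.conj.mpd_inv_mul_mul_of_odd hM.conj (by decide) hg'.conj
  have hprod : g⁻¹.val * M * g.val * (g⁻¹.val * (A.mpdb M - γ * M - M * γ) * g.val) =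
      g⁻¹.val * (M * A.mpdb M - M * γ * M - M * M * γ) * g.val := by
    simp only [mul_assoc, mul_sub, sub_mul, Units.mul_inv_cancel_left]
  have hdeg : A.MatDeg 2 1 (M * A.mpdb M - M * γ * M - M * M * γ) :=
    ((hM.mul hM.mpdb).sub ((hM.mul hγ).mul hM)).sub ((hM.mul hM).mul hγ)
  have hcycle : trace (M * γ * M) = trace (M * M * γ) :=
    A.trace_mul_cycle_of_odd hM (by decide) hγ (by decide) hM
  calc A.chernSimons h
      = trace (g⁻¹.val * (M * A.mpdb M - M * γ * M - M * M * γ) * g.val) := by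
        rw [chernSimons, hh, hcurv, hprod]
    _ = trace (M * A.mpdb M - M * γ * M - M * M * γ) := A.trace_inv_mul_mul hdeg hg hg'
    _ = trace (M * A.mpdb M) - (2 : ℂ) • trace (M * M * γ) := by
        rw [trace_sub, trace_sub, hcycle, two_smul, sub_sub]

theorem pdb_trace_rightLogDeriv_mul_leftLogDeriv (hb : A.MatDeg 0 0 b.val)
    (hb' : A.MatDeg 0 0 b⁻¹.val) (hc : A.MatDeg 0 0 c.val) (hc' : A.MatDeg 0 0 c⁻¹.val) :
    A.pdb (trace (A.rightLogDeriv b * A.leftLogDeriv c)) =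
      trace (A.leftLogDeriv c * A.mpdb (A.rightLogDeriv b)) -
        trace (A.rightLogDeriv b * A.mpdb (A.leftLogDeriv c)) := by
  have hθ₁ := hb.rightLogDeriv hb'
  have hθ₂ := hc.leftLogDeriv hc'
  rw [A.trace_mul_comm_of_even hθ₂ hθ₁.mpdb (by decide)]
  exact A.conj.pd_trace_mul_of_odd hθ₁.conj (by decide)

theorem pd_trace_leftLogDeriv_mul_conj_rightLogDeriv (hb : A.MatDeg 0 0 b.val)
    (hb' : A.MatDeg 0 0 b⁻¹.val) (hc : A.MatDeg 0 0 c.val) (hc' : A.MatDeg 0 0 c⁻¹.val) :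
    A.pd (trace (A.leftLogDeriv c * A.conj.rightLogDeriv b)) =
      trace (A.leftLogDeriv c * A.mpdb (A.rightLogDeriv b)) -
        trace (A.leftLogDeriv c * A.leftLogDeriv c * A.conj.rightLogDeriv b) -
        trace (A.leftLogDeriv c * A.rightLogDeriv b * A.conj.rightLogDeriv b) -
        trace (A.rightLogDeriv b * A.leftLogDeriv c * A.conj.rightLogDeriv b) := by
  have hθ₁ := hb.rightLogDeriv hb'
  have hθ₂ := hc.leftLogDeriv hc'
  rw [← A.trace_mul_cycle_of_odd hθ₂ (by decide) (hb.conj.rightLogDeriv hb'.conj).conj (by decide)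
    hθ₁, A.pd_trace_mul_of_odd hθ₂ (by decide), A.mpd_leftLogDeriv hc',
    A.mpd_conj_rightLogDeriv hb hb']
  simp only [mul_add, mul_neg, neg_mul, trace_add, trace_neg, mul_assoc]
  abel

theorem pd_trace_leftLogDeriv_mul_conj_leftLogDeriv (hg : A.MatDeg 0 0 g.val)
    (hg' : A.MatDeg 0 0 g⁻¹.val) :
    A.pd (trace (A.leftLogDeriv g * A.conj.leftLogDeriv g)) =
      A.chernSimons g + trace (A.leftLogDeriv g * A.leftLogDeriv g * A.conj.leftLogDeriv g) := by
  have hθ := hg.leftLogDeriv hg'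
  rw [← A.trace_mul_cycle_of_odd hθ (by decide) (hg.conj.leftLogDeriv hg'.conj).conj (by decide) hθ,
    A.pd_trace_mul_of_odd hθ (by decide), A.mpd_leftLogDeriv hg', A.mpd_conj_leftLogDeriv hg',
    chernSimons]
  simp only [mul_sub, mul_neg, neg_mul, trace_sub, trace_neg, mul_assoc]
  abel

theorem chernSimons_mul (hb : A.MatDeg 0 0 b.val) (hb' : A.MatDeg 0 0 b⁻¹.val)
    (hc : A.MatDeg 0 0 c.val) (hc' : A.MatDeg 0 0 c⁻¹.val) :
    A.chernSimons (c * b) + A.pdb (trace (A.rightLogDeriv b * A.leftLogDeriv c)) =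
      A.chernSimons b + A.chernSimons c +
        (2 : ℂ) • A.pd (trace (A.leftLogDeriv c * A.conj.rightLogDeriv b)) := by
  have hθ₁ := hb.rightLogDeriv hb'
  have hθ₂ := hc.leftLogDeriv hc'
  rw [A.chernSimons_eq_of_leftLogDeriv_eq_inv_mul_mul (hθ₁.add hθ₂) hb hb' (A.leftLogDeriv_mul hc),
    A.chernSimons_eq_of_leftLogDeriv_eq_inv_mul_mul hθ₁ hb hb'
      A.leftLogDeriv_eq_inv_mul_rightLogDeriv_mul,
    A.pdb_trace_rightLogDeriv_mul_leftLogDeriv hb hb' hc hc',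
    A.pd_trace_leftLogDeriv_mul_conj_rightLogDeriv hb hb' hc hc', A.mpdb_add, chernSimons]
  simp only [mul_add, add_mul, trace_add, two_smul]
  abel

section BlockTriangular

variable {α : Type*} [LinearOrder α] {u : Fin r → α}

theorem blockTriangular_mpd (hM : M.BlockTriangular u) : (A.mpd M).BlockTriangular u :=
  hM.map A.pd

theorem blockTriangular_leftLogDeriv (hg : A.MatDeg 0 0 g.val) (hg' : A.MatDeg 0 0 g⁻¹.val)
    (htri : g.val.BlockTriangular u) : (A.leftLogDeriv g).BlockTriangular u :=
  (A.blockTriangular_inv hg hg' htri).mul (A.blockTriangular_mpd htri)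

theorem chernSimons_eq_zero_of_blockTriangular (hg : A.MatDeg 0 0 g.val)
    (hg' : A.MatDeg 0 0 g⁻¹.val) (hu : u.Injective) (htri : g.val.BlockTriangular u)
    (hdiag : ∀ i, A.pd (g.val i i) = 0) : A.chernSimons g = 0 := by
  have hθ := A.blockTriangular_leftLogDeriv hg hg' htri
  have hθdiag (i : Fin r) : A.leftLogDeriv g i i = 0 := by
    rw [leftLogDeriv, mul_apply_self_of_blockTriangular hu (A.blockTriangular_inv hg hg' htri)
      (A.blockTriangular_mpd htri), mpd, map_apply, hdiag, mul_zero]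
  have hθ_mpdb : (A.mpdb (A.leftLogDeriv g)).BlockTriangular u := A.conj.blockTriangular_mpd hθ
  rw [chernSimons, trace_mul_of_blockTriangular hu hθ hθ_mpdb]
  exact Finset.sum_eq_zero fun i _ => by rw [hθdiag, zero_mul]

theorem chernSimons_eq_pd_of_blockTriangular (hg : A.MatDeg 0 0 g.val)
    (hg' : A.MatDeg 0 0 g⁻¹.val) (hu : u.Injective) (htri : g.val.BlockTriangular u) :
    A.chernSimons g = A.pd (trace (A.leftLogDeriv g * A.conj.leftLogDeriv g)) := by
  have hθ := A.blockTriangular_leftLogDeriv hg hg' htri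
  have hθb := A.conj.blockTriangular_leftLogDeriv hg.conj hg'.conj htri
  have hcubic : trace (A.leftLogDeriv g * A.leftLogDeriv g * A.conj.leftLogDeriv g) = 0 := by
    rw [trace_mul_of_blockTriangular hu (hθ.mul hθ) hθb]
    refine Finset.sum_eq_zero fun i _ => ?_
    rw [mul_apply_self_of_blockTriangular hu hθ hθ,
      A.mul_self_eq_zero_of_odd (hg.leftLogDeriv hg' i i) (by decide), zero_mul]
  rw [A.pd_trace_leftLogDeriv_mul_conj_leftLogDeriv hg hg', hcubic, add_zero]

end BlockTriangular

end LogDeriv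

end DolbeaultAlgebra

theorem stmt15_general (A : DolbeaultAlgebra Ω) {r : ℕ} {b c : (Matrix (Fin r) (Fin r) Ω)ˣ}
    (hb : A.MatDeg 0 0 b.val) (hb' : A.MatDeg 0 0 b⁻¹.val)
    (hc : A.MatDeg 0 0 c.val) (hc' : A.MatDeg 0 0 c⁻¹.val)
    {α β : Type*} [LinearOrder α] [LinearOrder β] {u : Fin r → α} {v : Fin r → β}
    (hu : u.Injective) (hbtri : b.val.BlockTriangular u) (hbdiag : ∀ i, A.pd (b.val i i) = 0)
    (hv : v.Injective) (hctri : c.val.BlockTriangular v) :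
    A.chernSimons (c * b) + A.pdb (Matrix.trace (A.rightLogDeriv b * A.leftLogDeriv c)) =
      A.pd (Matrix.trace ((2 : ℂ) • (A.leftLogDeriv c * A.conj.rightLogDeriv b) +
        A.leftLogDeriv c * A.conj.leftLogDeriv c)) := by
  rw [A.chernSimons_mul hb hb' hc hc',
    A.chernSimons_eq_zero_of_blockTriangular hb hb' hu hbtri hbdiag,
    A.chernSimons_eq_pd_of_blockTriangular hc hc' hv hctri, Matrix.trace_add, Matrix.trace_smul,
    map_add, map_smul, zero_add, add_comm]

/-- (Ascent step for `k = 2`) In the Cholesky setting,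
`Tr(BθBΘ) + ∂̄Tr(θ₁θ₂) = ∂Tr(2θ₂θ̄₁ + θ₂θ̄₂)`. -/
theorem stmt15
    (A : DolbeaultAlgebra Ω) (r : ℕ) (hr : 1 ≤ r)
    (b c binv cinv : Matrix (Fin r) (Fin r) Ω)
    (hbdeg : A.MatDeg 0 0 b) (hcdeg : A.MatDeg 0 0 c)
    (hbinvdeg : A.MatDeg 0 0 binv) (hcinvdeg : A.MatDeg 0 0 cinv)
    (hbu : ∀ i j : Fin r, j < i → b i j = 0) (hbd : ∀ i : Fin r, b i i = 1)
    (hcl : ∀ i j : Fin r, i < j → c i j = 0)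
    (hbinvl : binv * b = 1) (hbinvr : b * binv = 1)
    (hcinvl : cinv * c = 1) (hcinvr : c * cinv = 1)
    (h hinv : Matrix (Fin r) (Fin r) Ω) (hh : h = c * b) (hhinv : hinv = binv * cinv)
    (θ₁ θ₂ θ θb₁ θb₂ θb : Matrix (Fin r) (Fin r) Ω)
    (hθ₁ : θ₁ = A.mpd b * binv) (hθ₂ : θ₂ = cinv * A.mpd c) (hθ : θ = θ₁ + θ₂)
    (hθb₁ : θb₁ = A.mpdb b * binv) (hθb₂ : θb₂ = cinv * A.mpdb c) (hθb : θb = θb₁ + θb₂)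
    (Bθ Bθb BΘ : Matrix (Fin r) (Fin r) Ω)
    (hBθ : Bθ = hinv * A.mpd h) (hBθb : Bθb = hinv * A.mpdb h) (hBΘ : BΘ = A.mpdb Bθ) :
    Matrix.trace (Bθ * BΘ) + A.pdb (Matrix.trace (θ₁ * θ₂)) =
      A.pd (Matrix.trace ((2 : ℂ) • (θ₂ * θb₁) + θ₂ * θb₂)) := by
  subst hBΘ hBθ hθ₁ hθ₂ hθb₁ hθb₂ hh hhinv
  exact stmt15_general A (b := ⟨b, binv, hbinvr, hbinvl⟩) (c := ⟨c, cinv, hcinvr, hcinvl⟩)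
    hbdeg hbinvdeg hcdeg hcinvdeg Function.injective_id (fun i j => hbu i j)
    (fun i => (congrArg A.pd (hbd i)).trans A.pd_one) OrderDual.toDual.injective fun i j => hcl i j
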